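/- arXiv:1602.00768 — 4 statements merged into one kernel-verified Lean document; each statement's English description precedes it below -/
import Mathlib

section
/- For every x in S_n', the kernel of x is contained in span{u_1, u_{m+n+1}}; in particular dim ker x ≤ 2. (First claim of Lemma 2.2 of the paper, which shows that every element of the Mirkovic–Vybornov slice for a two-block nilpotent has at most two Jordan blocks.) -/
/-!
Every column of `x - z_n` lies in `span{u_{m+n}, u_{m+2n}}`, and these two coordinates vanish on the
range of `z_n`, so the ranges of `x - z_n` and `z_n` are disjoint. If `x v = 0`, then
`z_n v = -(x - z_n) v` lies in both ranges, hence is zero. Thus `ker x ≤ ker z_n`, and `ker z_n` is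
spanned by the first vectors `u_1`, `u_{m+n+1}` of the two Jordan chains.
-/

open Module BigOperators

noncomputable section

/-- The `k`-th standard basis vector `u_k` of `ℂ^(m+2n)`, indexed `1`-based;
it is zero if `k` is out of the range `1, …, m+2n`. -/
def stdVec (m n : ℕ) (k : ℕ) : Fin (m + 2*n) → ℂ := fun i => if (i : ℕ) + 1 = k then 1 else 0

/-- The matrix of the two-block nilpotent `z_n` of Jordan type `(m+n, n)`:
`z_n u_i = u_{i-1}` for `2 ≤ i ≤ m+n` and for `m+n+2 ≤ i ≤ m+2n`, and
`z_n u_1 = z_n u_{m+n+1} = 0`. -/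
def zMat (m n : ℕ) : Matrix (Fin (m + 2*n)) (Fin (m + 2*n)) ℂ :=
  fun i j => if (j : ℕ) = (i : ℕ) + 1 ∧ (j : ℕ) ≠ m + n then 1 else 0

/-- The two-block nilpotent `z_n` as an endomorphism of `ℂ^(m+2n)`. -/
def zn (m n : ℕ) : Module.End ℂ (Fin (m + 2*n) → ℂ) := Matrix.toLin' (zMat m n)

/-- The enlarged slice `S_n' ⊆ End(ℂ^(m+2n))`: the endomorphisms whose matrix agrees
with that of `z_n` outside rows `m+n` and `m+2n`, i.e. `x u_j - z_n u_j` lies in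
`span{u_{m+n}, u_{m+2n}}` for every `j`. -/
def slice' (m n : ℕ) : Set (Module.End ℂ (Fin (m + 2*n) → ℂ)) :=
  { x | ∀ j : ℕ, x (stdVec m n j) - zn m n (stdVec m n j) ∈
      Submodule.span ℂ {stdVec m n (m + n), stdVec m n (m + 2*n)} }


lemma ker_le_ker_of_disjoint_range_sub {R M M₂ : Type*} [Semiring R] [AddCommGroup M] [Module R M]
    [AddCommGroup M₂] [Module R M₂] {f g : M →ₗ[R] M₂}
    (h : Disjoint (LinearMap.range (f - g)) (LinearMap.range g)) :
    LinearMap.ker f ≤ LinearMap.ker g := by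
  intro v hv
  have hfg : (f - g) (-v) = g v := by simp [LinearMap.mem_ker.mp hv]
  exact Submodule.disjoint_def.mp h (g v) ⟨-v, hfg⟩ ⟨v, rfl⟩

lemma finrank_span_pair_le_two {R M : Type*} [Semiring R] [StrongRankCondition R]
    [AddCommMonoid M] [Module R M] (v w : M) : finrank R (Submodule.span R {v, w}) ≤ 2 := by
  have h := finrank_range_le_card (R := R) ![v, w]
  rwa [Matrix.range_cons_cons_empty, Fintype.card_fin] at h

section Slice

variable {m n : ℕ}

lemma sum_smul_stdVec (v : Fin (m + 2 * n) → ℂ) :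
    ∑ i, v i • stdVec m n ((i : ℕ) + 1) = v := by
  ext k
  simp [stdVec, Fin.val_inj]

lemma mem_span_stdVec_image {s : Set ℕ} {v : Fin (m + 2 * n) → ℂ} :
    v ∈ Submodule.span ℂ (stdVec m n '' s) ↔
      ∀ i : Fin (m + 2 * n), (i : ℕ) + 1 ∉ s → v i = 0 := by
  refine ⟨fun hv i hi => ?_, fun hv => ?_⟩
  · have hle : Submodule.span ℂ (stdVec m n '' s) ≤ LinearMap.ker (LinearMap.proj i) := by
      rw [Submodule.span_le]
      rintro _ ⟨k, hk, rfl⟩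
      have hik : (i : ℕ) + 1 ≠ k := fun h => hi (h ▸ hk)
      exact if_neg hik
    exact hle hv
  · rw [← sum_smul_stdVec v]
    refine Submodule.sum_mem _ fun i _ => ?_
    by_cases hi : (i : ℕ) + 1 ∈ s
    · exact Submodule.smul_mem _ _ (Submodule.subset_span ⟨_, hi, rfl⟩)
    · simp [hv i hi]

lemma mem_span_stdVec_pair {a b : ℕ} {v : Fin (m + 2 * n) → ℂ} :
    v ∈ Submodule.span ℂ {stdVec m n a, stdVec m n b} ↔
      ∀ i : Fin (m + 2 * n), (i : ℕ) + 1 ≠ a → (i : ℕ) + 1 ≠ b → v i = 0 := by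
  rw [← Set.image_pair, mem_span_stdVec_image]
  simp [not_or]

lemma range_sub_zn_le_of_mem_slice' {x : Module.End ℂ (Fin (m + 2 * n) → ℂ)}
    (hx : x ∈ slice' m n) :
    LinearMap.range (x - zn m n) ≤
      Submodule.span ℂ {stdVec m n (m + n), stdVec m n (m + 2 * n)} := by
  rintro _ ⟨v, rfl⟩
  rw [← sum_smul_stdVec v, map_sum]
  refine Submodule.sum_mem _ fun j _ => ?_
  rw [map_smul]
  exact Submodule.smul_mem _ _ (hx _)

lemma zn_apply_of_val_eq_add_one (v : Fin (m + 2 * n) → ℂ) {i k : Fin (m + 2 * n)}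
    (hik : (k : ℕ) = i + 1) (hk : (k : ℕ) ≠ m + n) : zn m n v i = v k := by
  have hrow : zMat m n i = Pi.single k 1 := by
    ext j
    simp only [zMat, Pi.single_apply, Fin.ext_iff]
    congr 1
    rw [eq_iff_iff]
    omega
  rw [zn, Matrix.toLin'_apply, Matrix.mulVec, hrow, single_one_dotProduct]

lemma zn_apply_eq_zero (v : Fin (m + 2 * n) → ℂ) {i : Fin (m + 2 * n)}
    (hi : (i : ℕ) + 1 = m + n ∨ (i : ℕ) + 1 = m + 2 * n) : zn m n v i = 0 := by
  have hrow : zMat m n i = 0 := by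
    ext j
    exact if_neg (by omega)
  rw [zn, Matrix.toLin'_apply, Matrix.mulVec, hrow, zero_dotProduct]

lemma ker_zn : LinearMap.ker (zn m n) =
    Submodule.span ℂ {stdVec m n 1, stdVec m n (m + n + 1)} := by
  ext v
  rw [LinearMap.mem_ker, mem_span_stdVec_pair]
  refine ⟨fun hv k hk₁ hk₂ => ?_, fun hv => funext fun i => ?_⟩
  · have hpred : (k : ℕ) = (k - 1 : ℕ) + 1 := by omega
    rw [← zn_apply_of_val_eq_add_one (i := ⟨k - 1, by omega⟩) v hpred (by omega), hv,
      Pi.zero_apply]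
  · by_cases hi : (i : ℕ) + 1 = m + n ∨ (i : ℕ) + 1 = m + 2 * n
    · exact zn_apply_eq_zero v hi
    · rw [not_or] at hi
      rw [zn_apply_of_val_eq_add_one (k := ⟨i + 1, by omega⟩) v rfl hi.1]
      exact hv _ (by simp) (by simpa using hi.1)

lemma disjoint_span_stdVec_range_zn :
    Disjoint (Submodule.span ℂ {stdVec m n (m + n), stdVec m n (m + 2 * n)})
      (LinearMap.range (zn m n)) := by
  rw [Submodule.disjoint_def]
  rintro _ hw ⟨v, rfl⟩
  ext i
  by_cases hi : (i : ℕ) + 1 = m + n ∨ (i : ℕ) + 1 = m + 2 * n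
  · exact zn_apply_eq_zero v hi
  · rw [not_or] at hi
    exact mem_span_stdVec_pair.mp hw i hi.1 hi.2

lemma ker_le_ker_zn_of_mem_slice' {x : Module.End ℂ (Fin (m + 2 * n) → ℂ)}
    (hx : x ∈ slice' m n) : LinearMap.ker x ≤ LinearMap.ker (zn m n) :=
  ker_le_ker_of_disjoint_range_sub
    (disjoint_span_stdVec_range_zn.mono_left (range_sub_zn_le_of_mem_slice' hx))

end Slice

/-- For every `x` in the enlarged slice `S_n'`, the kernel of `x` is
contained in `span{u_1, u_{m+n+1}}`; in particular `dim ker x ≤ 2`. -/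
theorem slice'_ker_le_span (m n : ℕ) (hn : 1 ≤ n)
    (x : Module.End ℂ (Fin (m + 2*n) → ℂ)) (hx : x ∈ slice' m n) :
    LinearMap.ker x ≤ Submodule.span ℂ {stdVec m n 1, stdVec m n (m + n + 1)} ∧
    Module.finrank ℂ (LinearMap.ker x) ≤ 2 := by
  have hle : LinearMap.ker x ≤ Submodule.span ℂ {stdVec m n 1, stdVec m n (m + n + 1)} :=
    (ker_le_ker_zn_of_mem_slice' hx).trans_eq ker_zn
  exact ⟨hle, (Submodule.finrank_mono hle).trans (finrank_span_pair_le_two _ _)⟩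
end
end

section
/- If x ∈ S_n' has dim ker x = 2, then γ restricts to a linear isomorphism from the image of x onto ℂ^{m+2n−2}. (Second claim of Lemma 2.2 of the paper: the natural isomorphism φ_x : x·V_{m+2n+2} ≅ ℂ^{m+2n}.) -/
/-!
The map `γ` forgets the coordinates `m+n` and `m+2n`, the only ones in which an element of `S_n'`
may differ from `z_n`, and `z_n` shifts each remaining coordinate by one. Hence `γ ∘ x` is the same
coordinate projection for every `x ∈ S_n'`, and in particular `γ` maps the image of `x` onto
`ℂ^(m+2n-2)`. If `dim ker x = 2`, then the image of `x` also has dimension `m+2n-2`.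
-/

open Module BigOperators

noncomputable section

/-- The matrix of the projection `γ : ℂ^(m+2n) → ℂ^(m+2n-2)`:
`γ u_i = u_i` for `1 ≤ i ≤ m+n-1`, `γ u_{m+n} = 0`,
`γ u_{m+n+j} = u_{m+n-1+j}` for `1 ≤ j ≤ n-1`, and `γ u_{m+2n} = 0`. -/
def gamMat (m n : ℕ) : Matrix (Fin (m + 2*(n-1))) (Fin (m + 2*n)) ℂ :=
  fun i j => if ((j : ℕ) = (i : ℕ) ∧ (j : ℕ) + 1 < m + n) ∨
      ((j : ℕ) = (i : ℕ) + 1 ∧ m + n ≤ (j : ℕ)) then 1 else 0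

/-- The linear map `γ : ℂ^(m+2n) → ℂ^(m+2n-2)`. -/
def gam (m n : ℕ) : (Fin (m + 2*n) → ℂ) →ₗ[ℂ] (Fin (m + 2*(n-1)) → ℂ) :=
  Matrix.toLin' (gamMat m n)

lemma domRestrict_range_bijective_of_finrank_ker_add_finrank_eq {K U V W : Type*} [DivisionRing K]
    [AddCommGroup U] [Module K U] [FiniteDimensional K U] [AddCommGroup V] [Module K V]
    [AddCommGroup W] [Module K W] {f : U →ₗ[K] V} {g : V →ₗ[K] W}
    (hgf : Function.Surjective (g ∘ₗ f))
    (hdim : finrank K (LinearMap.ker f) + finrank K W = finrank K U) :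
    Function.Bijective (g.domRestrict (LinearMap.range f)) := by
  have : FiniteDimensional K W := Module.Finite.of_surjective _ hgf
  have hsurj : Function.Surjective (g.domRestrict (LinearMap.range f)) :=
    Function.Surjective.of_comp (g := f.rangeRestrict) hgf
  have hrange : finrank K (LinearMap.range f) = finrank K W := by
    have := f.finrank_range_add_finrank_ker
    omega
  exact ⟨(LinearMap.injective_iff_surjective_of_finrank_eq_finrank hrange).2 hsurj, hsurj⟩

section

variable {m n : ℕ} {x : Module.End ℂ (Fin (m + 2 * n) → ℂ)}

lemma stdVec_succ_eq_single (j : Fin (m + 2 * n)) :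
    stdVec m n (j + 1) = Pi.single j 1 := by
  ext i
  simp [stdVec, Pi.single_apply, Fin.ext_iff]

lemma apply_eq_zero_of_mem_span_stdVec_pair {k l : ℕ} {v : Fin (m + 2 * n) → ℂ}
    (hv : v ∈ Submodule.span ℂ {stdVec m n k, stdVec m n l}) {i : Fin (m + 2 * n)}
    (hk : (i : ℕ) + 1 ≠ k) (hl : (i : ℕ) + 1 ≠ l) : v i = 0 := by
  obtain ⟨a, b, rfl⟩ := Submodule.mem_span_pair.1 hv
  simp [stdVec, hk, hl]

lemma zn_apply (v : Fin (m + 2 * n) → ℂ) {i j : Fin (m + 2 * n)}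
    (hij : (j : ℕ) = i + 1) (hi : (i : ℕ) + 1 ≠ m + n) : zn m n v i = v j := by
  have hrow : zMat m n i = Pi.single j 1 := by
    ext l
    simp only [zMat, Pi.single_apply, Fin.ext_iff]
    congr 1
    simp only [eq_iff_iff]
    omega
  rw [zn, Matrix.toLin'_apply, Matrix.mulVec, hrow, single_one_dotProduct]

lemma apply_eq_zn_apply_of_mem_slice' (hx : x ∈ slice' m n) (v : Fin (m + 2 * n) → ℂ)
    {i : Fin (m + 2 * n)} (hi₁ : (i : ℕ) + 1 ≠ m + n) (hi₂ : (i : ℕ) + 1 ≠ m + 2 * n) :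
    x v i = zn m n v i := by
  suffices h : LinearMap.proj i ∘ₗ x = LinearMap.proj i ∘ₗ zn m n from LinearMap.congr_fun h v
  refine (Pi.basisFun ℂ (Fin (m + 2 * n))).ext fun j => ?_
  have hj := apply_eq_zero_of_mem_span_stdVec_pair (hx (j + 1)) hi₁ hi₂
  rw [stdVec_succ_eq_single] at hj
  simpa using sub_eq_zero.1 hj

/-- The `0`-based index in `ℂ^(m+2n)` of the coordinate which `γ` places at position `i`: the
indices `m+n-1` and `m+2n-1` are skipped. -/
def keptIndex (hn : 1 ≤ n) (i : Fin (m + 2 * (n - 1))) : Fin (m + 2 * n) :=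
  ⟨if (i : ℕ) + 1 < m + n then i else i + 1, by split_ifs <;> omega⟩

/-- The index following `keptIndex hn i`, that is, the index of the coordinate which `γ ∘ z_n`
places at position `i`. -/
def keptIndexSucc (hn : 1 ≤ n) (i : Fin (m + 2 * (n - 1))) : Fin (m + 2 * n) :=
  ⟨keptIndex hn i + 1, by simp only [keptIndex]; split_ifs <;> omega⟩

lemma keptIndex_succ_ne_add (hn : 1 ≤ n) (i : Fin (m + 2 * (n - 1))) :
    (keptIndex hn i : ℕ) + 1 ≠ m + n := by
  simp only [keptIndex]
  split_ifs <;> omega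

lemma keptIndexSucc_injective (hn : 1 ≤ n) :
    Function.Injective (keptIndexSucc (m := m) hn) := by
  intro i j hij
  simp only [keptIndexSucc, keptIndex, Fin.mk.injEq] at hij
  ext
  split_ifs at hij <;> omega

lemma gam_eq_funLeft_keptIndex (hn : 1 ≤ n) :
    gam m n = LinearMap.funLeft ℂ ℂ (keptIndex hn) := by
  have hrow (i : Fin (m + 2 * (n - 1))) : gamMat m n i = Pi.single (keptIndex hn i) 1 := by
    ext j
    simp only [gamMat, keptIndex, Pi.single_apply, Fin.ext_iff]
    congr 1
    simp only [eq_iff_iff]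
    split_ifs <;> omega
  refine LinearMap.ext fun v => funext fun i => ?_
  rw [gam, Matrix.toLin'_apply, Matrix.mulVec, hrow, single_one_dotProduct,
    LinearMap.funLeft_apply]

lemma gam_comp_eq_funLeft_keptIndexSucc_of_mem_slice' (hn : 1 ≤ n) (hx : x ∈ slice' m n) :
    gam m n ∘ₗ x = LinearMap.funLeft ℂ ℂ (keptIndexSucc hn) := by
  refine LinearMap.ext fun v => funext fun i => ?_
  have hi₁ := keptIndex_succ_ne_add hn i
  have hi₂ : (keptIndex hn i : ℕ) + 1 ≠ m + 2 * n := (keptIndexSucc hn i).isLt.ne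
  calc gam m n (x v) i = x v (keptIndex hn i) := by
        rw [gam_eq_funLeft_keptIndex hn, LinearMap.funLeft_apply]
    _ = zn m n v (keptIndex hn i) := apply_eq_zn_apply_of_mem_slice' hx v hi₁ hi₂
    _ = v (keptIndexSucc hn i) := zn_apply v rfl hi₁

lemma gam_comp_surjective_of_mem_slice' (hn : 1 ≤ n) (hx : x ∈ slice' m n) :
    Function.Surjective (gam m n ∘ₗ x) := by
  rw [gam_comp_eq_funLeft_keptIndexSucc_of_mem_slice' hn hx]
  exact LinearMap.funLeft_surjective_of_injective ℂ ℂ _ (keptIndexSucc_injective hn)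

end

/-- If `x ∈ S_n'` has `dim ker x = 2`, then `γ` restricts to a linear
isomorphism from the image of `x` onto `ℂ^(m+2n−2)`. -/
theorem gam_restrict_range_bijective (m n : ℕ) (hn : 1 ≤ n)
    (x : Module.End ℂ (Fin (m + 2*n) → ℂ)) (hx : x ∈ slice' m n)
    (hker : Module.finrank ℂ (LinearMap.ker x) = 2) :
    Function.Bijective ((gam m n).domRestrict (LinearMap.range x)) := by
  refine domRestrict_range_bijective_of_finrank_ker_add_finrank_eq
    (gam_comp_surjective_of_mem_slice' hn hx) ?_
  rw [hker, finrank_fin_fun, finrank_fin_fun]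
  omega
end
end

section
/- The map x ↦ Φ(x) := γ ∘ x ∘ (γ|_{im x})^{−1} is a bijection from the set {x ∈ S_n : x nilpotent and dim ker x = 2} onto the set {y ∈ S_{n−1} : y nilpotent}. (Claim in the proof of Proposition 2.3 of the paper: Φ gives a bijection between the nilpotent elements of the slice S_{n+1} with two-dimensional kernel and the nilpotent elements of the slice S_n, stated here with indices (n, n−1).) -/
/-!
Write `n = k + 1`, `V = ℂ^(m+2k+2)`, `W = ℂ^(m+2k)`. The map `γ : V → W` drops the last coordinate
of each of the two Jordan blocks; let `σ : V → W` drop the first ones. An endomorphism `x` of `V`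
lies in `S_n'` iff `γ ∘ x = σ`. Then `ker x ⊆ ker σ`, so `dim ker x = 2` means `ker x = ker σ`,
that is, `x = s ∘ σ` for a section `s` of `γ`. Since `im x = im s`, the inverse of `γ|_{im x}` is
`s`, and `Φ(x) = γ ∘ s ∘ σ ∘ s = σ ∘ s`. Thus `x` and `Φ(x)` are the two composites of `s` and
`σ`, and one is nilpotent iff the other is.

A section `s` of `γ` is determined by its coordinates at the ends of the two blocks. These are the
two free rows of `σ ∘ s`, except that for `n = 1` the second block of `W` is empty; in that case
the slice condition on `s ∘ σ` says exactly that the missing coordinate of `s` vanishes. For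
`n ≥ 2` the slice conditions on `s ∘ σ` and `σ ∘ s` agree, because `σ` shifts the first block by
one. Hence `s ∘ σ ↦ σ ∘ s` is a bijection from `{x ∈ S_n : dim ker x = 2}` onto `S_{n-1}`.
-/

open Module BigOperators

noncomputable section

/-- The matrix entry `x_{p,q}` (`1`-based) of an endomorphism of `ℂ^(m+2n)`
in the standard basis `u_1, …, u_{m+2n}`. -/
def entry (m n : ℕ) (x : Module.End ℂ (Fin (m + 2*n) → ℂ)) (p q : ℕ) : ℂ :=
  ∑ i, stdVec m n p i * x (stdVec m n q) i

/-- The Mirkovic–Vybornov slice `S_n ⊆ S_n'`: for `n ≥ 1` it consists of those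
`x ∈ S_n'` whose matrix entries `x_{m+2n, j}` vanish for `n+1 ≤ j ≤ m+n`
(for `n = 0` the slices `S_0` and `S_0'` coincide, so no further condition is imposed). -/
def MVslice (m n : ℕ) : Set (Module.End ℂ (Fin (m + 2*n) → ℂ)) :=
  { x | x ∈ slice' m n ∧
      ∀ j : ℕ, n + 1 ≤ j → j ≤ m + n → n ≠ 0 → entry m n x (m + 2*n) j = 0 }

-- `Φ(x) := γ ∘ x ∘ (γ|_{im x})⁻¹ ∈ End(ℂ^(m+2n-2))`, defined whenever `γ` restricts
-- to a bijection from `im x` onto `ℂ^(m+2n-2)` (junk value `0` otherwise).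
open Classical in
noncomputable def Phi (m n : ℕ) (x : Module.End ℂ (Fin (m + 2*n) → ℂ)) :
    Module.End ℂ (Fin (m + 2*(n-1)) → ℂ) :=
  if h : Function.Bijective ((gam m n).domRestrict (LinearMap.range x)) then
    (gam m n) ∘ₗ x ∘ₗ (LinearMap.range x).subtype ∘ₗ
      (LinearEquiv.ofBijective ((gam m n).domRestrict (LinearMap.range x)) h).symm.toLinearMap
  else 0

lemma bijOn_setOf_mem_and {α β : Type*} {f : α → β} {s : Set α} {t : Set β} {p : α → Prop}
    {q : β → Prop} (hf : Set.BijOn f s t) (hpq : ∀ x ∈ s, (q (f x) ↔ p x)) :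
    Set.BijOn f {x | x ∈ s ∧ p x} {y | y ∈ t ∧ q y} := by
  convert hf.subset_right (r := {y | y ∈ t ∧ q y}) fun y hy => hy.1 using 1
  ext x
  exact and_congr_right fun hx => by simp [hf.mapsTo hx, hpq x hx]

section LinearAlgebra

variable {R V W : Type*}

lemma isNilpotent_comp_of_isNilpotent_comp [Semiring R] [AddCommMonoid V] [Module R V]
    [AddCommMonoid W] [Module R W] {f : V →ₗ[R] W} {g : W →ₗ[R] V}
    (h : IsNilpotent (g ∘ₗ f : Module.End R V)) : IsNilpotent (f ∘ₗ g : Module.End R W) := by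
  obtain ⟨r, hr⟩ := h
  have hcomm : ((f ∘ₗ g : Module.End R W) ^ r) ∘ₗ f = f ∘ₗ ((g ∘ₗ f : Module.End R V) ^ r) :=
    Module.End.commute_pow_left_of_commute (LinearMap.comp_assoc f g f) r
  refine ⟨r + 1, ?_⟩
  rw [pow_succ, Module.End.mul_eq_comp, ← LinearMap.comp_assoc, hcomm, hr, LinearMap.comp_zero,
    LinearMap.zero_comp]

lemma isNilpotent_comp_comm [Semiring R] [AddCommMonoid V] [Module R V]
    [AddCommMonoid W] [Module R W] (f : V →ₗ[R] W) (g : W →ₗ[R] V) :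
    IsNilpotent (f ∘ₗ g : Module.End R W) ↔ IsNilpotent (g ∘ₗ f : Module.End R V) :=
  ⟨isNilpotent_comp_of_isNilpotent_comp, isNilpotent_comp_of_isNilpotent_comp⟩

lemma comp_eq_and_finrank_ker_eq_iff_exists_section [DivisionRing R] [AddCommGroup V] [Module R V]
    [AddCommGroup W] [Module R W] {γ σ : V →ₗ[R] W} (hσ : Function.Surjective σ)
    [FiniteDimensional R (LinearMap.ker σ)] {x : Module.End R V} :
    γ ∘ₗ x = σ ∧ finrank R (LinearMap.ker x) = finrank R (LinearMap.ker σ) ↔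
      ∃ s : W →ₗ[R] V, γ ∘ₗ s = LinearMap.id ∧ s ∘ₗ σ = x := by
  constructor
  · rintro ⟨hx, hrank⟩
    have hker : LinearMap.ker x = LinearMap.ker σ :=
      Submodule.eq_of_le_of_finrank_eq (hx ▸ LinearMap.ker_le_ker_comp x γ) hrank
    obtain ⟨τ, hτ⟩ := σ.exists_rightInverse_of_surjective (LinearMap.range_eq_top.2 hσ)
    refine ⟨x ∘ₗ τ, by rw [← LinearMap.comp_assoc, hx, hτ], LinearMap.ext fun v => ?_⟩
    have hv : τ (σ v) - v ∈ LinearMap.ker x := by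
      rw [hker, LinearMap.mem_ker, map_sub, ← LinearMap.comp_apply, hτ, LinearMap.id_apply,
        sub_self]
    rwa [LinearMap.mem_ker, map_sub, sub_eq_zero] at hv
  · rintro ⟨s, hs, rfl⟩
    refine ⟨by rw [← LinearMap.comp_assoc, hs, LinearMap.id_comp], ?_⟩
    rw [LinearMap.ker_comp_of_ker_eq_bot _ (LinearMap.ker_eq_bot_of_inverse hs)]

section DomRestrict

variable [Semiring R] [AddCommMonoid V] [Module R V] [AddCommMonoid W] [Module R W]
  {γ : V →ₗ[R] W} {s : W →ₗ[R] V} {p : Submodule R V}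

lemma domRestrict_bijective_of_range_eq (hs : γ ∘ₗ s = LinearMap.id)
    (hp : LinearMap.range s = p) : Function.Bijective (γ.domRestrict p) := by
  subst hp
  refine ⟨?_, fun w => ⟨⟨s w, w, rfl⟩, LinearMap.congr_fun hs w⟩⟩
  rintro ⟨_, w, rfl⟩ ⟨_, w', rfl⟩ h
  have hw : w = w' := by
    simpa [LinearMap.domRestrict_apply, ← LinearMap.comp_apply, hs] using h
  rw [hw]

lemma subtype_comp_ofBijective_domRestrict_symm (hs : γ ∘ₗ s = LinearMap.id)
    (hp : LinearMap.range s = p) (h : Function.Bijective (γ.domRestrict p)) :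
    p.subtype ∘ₗ (LinearEquiv.ofBijective (γ.domRestrict p) h).symm.toLinearMap = s := by
  ext w
  have hw : (LinearEquiv.ofBijective (γ.domRestrict p) h).symm w =
      ⟨s w, hp ▸ LinearMap.mem_range_self s w⟩ := by
    rw [LinearEquiv.symm_apply_eq]
    exact (LinearMap.congr_fun hs w).symm
  simp [hw]

end DomRestrict

end LinearAlgebra

section ExtendSection

variable {R ι κ : Type*} [Semiring R]

lemma funLeft_single_of_injective [DecidableEq ι] [DecidableEq κ] {e : ι → κ}
    (he : Function.Injective e) (i : ι) (c : R) :
    LinearMap.funLeft R R e (Pi.single (e i) c) = Pi.single i c := by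
  ext j
  simp [LinearMap.funLeft_apply, Pi.single_apply, he.eq_iff]

/-- The candidate for a section `s` of `funLeft e` with `funLeft d ∘ s = y`: the coordinates of
`extendSection e d y w` are those of `w` along `e`, then those of `y w` along `d`, and `0` at the
indices outside both ranges. Where the ranges of `e` and `d` meet, `e` takes precedence. -/
def extendSection (e d : ι → κ) (y : Module.End R (ι → R)) : (ι → R) →ₗ[R] (κ → R) where
  toFun w := Function.extend e w (Function.extend d (y w) 0)
  map_add' v w := by
    rw [map_add, ← Function.extend_add, ← Function.extend_add, add_zero]
  map_smul' c w := by
    rw [map_smul, RingHom.id_apply, ← Function.extend_smul, ← Function.extend_smul, smul_zero]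

variable {e d : ι → κ}

lemma extendSection_apply (y : Module.End R (ι → R)) (w : ι → R) :
    extendSection e d y w = Function.extend e w (Function.extend d (y w) 0) := rfl

lemma extendSection_apply_of_notMem_range {l : κ} (he : l ∉ Set.range e) (hd : l ∉ Set.range d)
    (y : Module.End R (ι → R)) (w : ι → R) : extendSection e d y w l = 0 := by
  rw [extendSection_apply, Function.extend_apply' _ _ _ he, Function.extend_apply' _ _ _ hd,
    Pi.zero_apply]

lemma funLeft_comp_extendSection (he : Function.Injective e) (y : Module.End R (ι → R)) :
    LinearMap.funLeft R R e ∘ₗ extendSection e d y = LinearMap.id :=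
  LinearMap.ext fun w => funext (he.extend_apply w _)

lemma funLeft_comp_extendSection_eq (he : Function.Injective e) (hd : Function.Injective d)
    {y : Module.End R (ι → R)} (hy : ∀ w i j, d i = e j → y w i = w j) :
    LinearMap.funLeft R R d ∘ₗ extendSection e d y = y := by
  refine LinearMap.ext fun w => funext fun i => ?_
  rw [LinearMap.comp_apply, LinearMap.funLeft_apply, extendSection_apply]
  by_cases hi : d i ∈ Set.range e
  · obtain ⟨j, hj⟩ := hi
    rw [← hj, he.extend_apply, hy w i j hj.symm]
  · rw [Function.extend_apply' _ _ _ hi, hd.extend_apply]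

lemma extendSection_funLeft_comp [Finite ι] [DecidableEq ι] (he : Function.Injective e)
    (hd : Function.Injective d) {s : (ι → R) →ₗ[R] (κ → R)}
    (hs : LinearMap.funLeft R R e ∘ₗ s = LinearMap.id)
    (hs₀ : ∀ i, ∀ l ∉ Set.range e, l ∉ Set.range d → s (Pi.single i 1) l = 0) :
    extendSection e d (LinearMap.funLeft R R d ∘ₗ s) = s := by
  refine (Pi.basisFun R ι).ext fun i => funext fun l => ?_
  rw [Pi.basisFun_apply]
  set w : ι → R := Pi.single i 1
  by_cases hle : l ∈ Set.range e
  · obtain ⟨j, rfl⟩ := hle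
    rw [extendSection_apply, he.extend_apply]
    exact (congrFun (LinearMap.congr_fun hs w) j).symm
  by_cases hld : l ∈ Set.range d
  · obtain ⟨j, rfl⟩ := hld
    rw [extendSection_apply, Function.extend_apply' _ _ _ hle, hd.extend_apply]
    rfl
  · rw [extendSection_apply_of_notMem_range hle hld, hs₀ i l hle hld]

end ExtendSection

section BlockIndices

/-- The increasing enumeration of the indices of `ℂ^(m+2k+2)` other than the last one in each
Jordan block, identified with the indices of `ℂ^(m+2k)`. All indices are `0`-based. -/
def skipBlockEnds (m k : ℕ) (i : Fin (m + 2 * k)) : Fin (m + 2 * (k + 1)) :=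
  ⟨if (i : ℕ) < m + k then i else i + 1, by split_ifs <;> omega⟩

/-- The increasing enumeration of the indices of `ℂ^(m+2k+2)` other than the first one in each
Jordan block. -/
def skipBlockStarts (m k : ℕ) (i : Fin (m + 2 * k)) : Fin (m + 2 * (k + 1)) :=
  ⟨if (i : ℕ) < m + k then i + 1 else i + 2, by split_ifs <;> omega⟩

variable {m k : ℕ}

lemma skipBlockEnds_injective : Function.Injective (skipBlockEnds m k) := by
  intro i j h
  simp only [skipBlockEnds, Fin.ext_iff] at h ⊢
  grind

lemma skipBlockStarts_injective : Function.Injective (skipBlockStarts m k) := by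
  intro i j h
  simp only [skipBlockStarts, Fin.ext_iff] at h ⊢
  grind

lemma skipBlockStarts_eq_skipBlockEnds_iff {i j : Fin (m + 2 * k)} :
    skipBlockStarts m k i = skipBlockEnds m k j ↔ (j : ℕ) = i + 1 ∧ (j : ℕ) ≠ m + k := by
  simp only [skipBlockStarts, skipBlockEnds, Fin.ext_iff]
  grind

lemma exists_skipBlockEnds_skipBlockStarts_iff {i j : Fin (m + 2 * (k + 1))} :
    (∃ l, skipBlockEnds m k l = i ∧ skipBlockStarts m k l = j) ↔
      (j : ℕ) = i + 1 ∧ (j : ℕ) ≠ m + (k + 1) := by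
  simp only [skipBlockStarts, skipBlockEnds, Fin.ext_iff]
  constructor
  · grind
  · intro h
    refine ⟨⟨if (i : ℕ) < m + k then i else i - 1, ?_⟩, ?_⟩ <;> grind

lemma mem_range_skipBlockEnds_iff {l : Fin (m + 2 * (k + 1))} :
    l ∈ Set.range (skipBlockEnds m k) ↔
      (l : ℕ) + 1 ≠ m + (k + 1) ∧ (l : ℕ) + 1 ≠ m + 2 * (k + 1) := by
  simp only [skipBlockEnds, Set.mem_range, Fin.ext_iff]
  constructor
  · grind
  · intro h
    refine ⟨⟨if (l : ℕ) < m + k then l else l - 1, ?_⟩, ?_⟩ <;> grind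

lemma mem_range_skipBlockStarts_iff {l : Fin (m + 2 * (k + 1))} :
    l ∈ Set.range (skipBlockStarts m k) ↔ (l : ℕ) ≠ 0 ∧ (l : ℕ) ≠ m + (k + 1) := by
  simp only [skipBlockStarts, Set.mem_range, Fin.ext_iff]
  constructor
  · grind
  · intro h
    refine ⟨⟨if (l : ℕ) < m + (k + 1) then l - 1 else l - 2, ?_⟩, ?_⟩ <;> grind

/-- The map `γ : ℂ^(m+2k+2) → ℂ^(m+2k)` dropping the last coordinate of each Jordan block; unlike
`gam m (k + 1)`, its codomain is written without the truncated subtraction `k + 1 - 1`. -/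
abbrev dropBlockEnds (m k : ℕ) : (Fin (m + 2 * (k + 1)) → ℂ) →ₗ[ℂ] (Fin (m + 2 * k) → ℂ) :=
  LinearMap.funLeft ℂ ℂ (skipBlockEnds m k)

/-- The map `σ : ℂ^(m+2k+2) → ℂ^(m+2k)` dropping the first coordinate of each Jordan block, so that
`γ ∘ x = σ` for all `x` in the slice. -/
abbrev dropBlockStarts (m k : ℕ) : (Fin (m + 2 * (k + 1)) → ℂ) →ₗ[ℂ] (Fin (m + 2 * k) → ℂ) :=
  LinearMap.funLeft ℂ ℂ (skipBlockStarts m k)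

lemma dropBlockStarts_surjective : Function.Surjective (dropBlockStarts m k) :=
  LinearMap.funLeft_surjective_of_injective _ _ _ skipBlockStarts_injective

lemma finrank_ker_dropBlockStarts : finrank ℂ (LinearMap.ker (dropBlockStarts m k)) = 2 := by
  have h := LinearMap.finrank_range_add_finrank_ker (dropBlockStarts m k)
  rw [LinearMap.range_eq_top.2 dropBlockStarts_surjective, finrank_top, finrank_fin_fun,
    finrank_fin_fun] at h
  omega

end BlockIndices

section SliceCoordinates

variable {m n k : ℕ}

lemma stdVec_succ (i : Fin (m + 2 * n)) : stdVec m n (i + 1) = Pi.single i 1 := by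
  ext j
  simp [stdVec, Pi.single_apply, Fin.ext_iff]

lemma zn_apply_of_eq_succ {i j : Fin (m + 2 * n)} (hij : (j : ℕ) = i + 1) (hj : (j : ℕ) ≠ m + n)
    (v : Fin (m + 2 * n) → ℂ) : zn m n v i = v j := by
  have hrow : zMat m n i = Pi.single j 1 := by
    ext l
    simp only [zMat, Pi.single_apply, Fin.ext_iff]
    grind
  rw [zn, Matrix.toLin'_apply, Matrix.mulVec, hrow, single_one_dotProduct]

lemma gam_succ : gam m (k + 1) = dropBlockEnds m k := by
  refine LinearMap.ext fun v => funext fun i => ?_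
  have hrow : gamMat m (k + 1) i = Pi.single (skipBlockEnds m k i) 1 := by
    ext l
    simp only [gamMat, skipBlockEnds, Pi.single_apply, Fin.ext_iff]
    grind
  rw [gam, Matrix.toLin'_apply, Matrix.mulVec, hrow, single_one_dotProduct,
    LinearMap.funLeft_apply]

lemma mem_span_stdVec_blockEnds_iff {v : Fin (m + 2 * n) → ℂ} :
    v ∈ Submodule.span ℂ {stdVec m n (m + n), stdVec m n (m + 2 * n)} ↔
      ∀ i : Fin (m + 2 * n), (i : ℕ) + 1 ≠ m + n → (i : ℕ) + 1 ≠ m + 2 * n → v i = 0 := by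
  constructor
  · rintro hv i hi hi'
    obtain ⟨a, b, rfl⟩ := Submodule.mem_span_pair.1 hv
    simp [stdVec, hi, hi']
  · intro hv
    rw [pi_eq_sum_univ' v]
    refine Submodule.sum_mem _ fun i _ => ?_
    by_cases h : (i : ℕ) + 1 = m + n ∨ (i : ℕ) + 1 = m + 2 * n
    · rw [← stdVec_succ]
      exact Submodule.smul_mem _ _ (Submodule.subset_span (h.imp (congrArg _) (congrArg _)))
    · rw [not_or] at h
      rw [hv i h.1 h.2, zero_smul]
      exact Submodule.zero_mem _

lemma mem_slice'_iff_forall_mem_span {x : Module.End ℂ (Fin (m + 2 * n) → ℂ)} :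
    x ∈ slice' m n ↔ ∀ v, x v - zn m n v ∈
      Submodule.span ℂ {stdVec m n (m + n), stdVec m n (m + 2 * n)} := by
  refine ⟨fun hx v => ?_, fun hx j => hx _⟩
  suffices h : Submodule.comap (x - zn m n)
      (Submodule.span ℂ {stdVec m n (m + n), stdVec m n (m + 2 * n)}) = ⊤ from
    h.ge (Submodule.mem_top (x := v))
  rw [eq_top_iff, ← (Pi.basisFun ℂ _).span_eq, Submodule.span_le]
  rintro _ ⟨i, rfl⟩
  rw [Pi.basisFun_apply, ← stdVec_succ]
  exact hx (i + 1)

lemma mem_slice'_iff {x : Module.End ℂ (Fin (m + 2 * n) → ℂ)} :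
    x ∈ slice' m n ↔ ∀ v, ∀ i j : Fin (m + 2 * n), (j : ℕ) = i + 1 ∧ (j : ℕ) ≠ m + n →
      x v i = v j := by
  simp only [mem_slice'_iff_forall_mem_span, mem_span_stdVec_blockEnds_iff]
  refine forall_congr' fun v => ⟨fun h i j hij => ?_, fun h i hi hi' => ?_⟩
  · rw [← zn_apply_of_eq_succ hij.1 hij.2 v, ← sub_eq_zero]
    exact h i (hij.1 ▸ hij.2) (by omega)
  · have hlt : (i : ℕ) + 1 < m + 2 * n := by omega
    rw [Pi.sub_apply, h i ⟨i + 1, hlt⟩ ⟨rfl, hi⟩, zn_apply_of_eq_succ (j := ⟨i + 1, hlt⟩) rfl hi,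
      sub_self]

lemma mem_slice'_succ_iff {x : Module.End ℂ (Fin (m + 2 * (k + 1)) → ℂ)} :
    x ∈ slice' m (k + 1) ↔ dropBlockEnds m k ∘ₗ x = dropBlockStarts m k := by
  simp only [mem_slice'_iff, ← exists_skipBlockEnds_skipBlockStarts_iff]
  constructor
  · exact fun h => LinearMap.ext fun v => funext fun l => h v _ _ ⟨l, rfl, rfl⟩
  · rintro h v _ _ ⟨l, rfl, rfl⟩
    exact congrFun (LinearMap.congr_fun h v) l

lemma entry_succ_succ (x : Module.End ℂ (Fin (m + 2 * n) → ℂ)) (i j : Fin (m + 2 * n)) :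
    entry m n x (i + 1) (j + 1) = x (Pi.single j 1) i := by
  simp [entry, stdVec_succ, Pi.single_apply]

lemma mem_MVslice_iff {x : Module.End ℂ (Fin (m + 2 * n) → ℂ)} :
    x ∈ MVslice m n ↔ x ∈ slice' m n ∧ (n ≠ 0 → ∀ i j : Fin (m + 2 * n),
      (i : ℕ) + 1 = m + 2 * n → n ≤ (j : ℕ) → (j : ℕ) < m + n → x (Pi.single j 1) i = 0) := by
  refine and_congr_right fun _ => ⟨fun h hn i j hi hj hj' => ?_, fun h j hj hj' hn => ?_⟩
  · rw [← entry_succ_succ, hi]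
    exact h (j + 1) (by omega) (by omega) hn
  · obtain ⟨i, hi⟩ : ∃ i : Fin (m + 2 * n), (i : ℕ) + 1 = m + 2 * n :=
      ⟨⟨m + 2 * n - 1, by omega⟩, by grind⟩
    obtain ⟨l, rfl⟩ : ∃ l : Fin (m + 2 * n), (l : ℕ) + 1 = j :=
      ⟨⟨j - 1, by omega⟩, by grind⟩
    have hentry := entry_succ_succ x i l
    rw [hi] at hentry
    rw [hentry]
    exact h hn i l hi (by omega) (by omega)

end SliceCoordinates

section Sections

variable {m k : ℕ} {s : (Fin (m + 2 * k) → ℂ) →ₗ[ℂ] (Fin (m + 2 * (k + 1)) → ℂ)}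

/-- For a section `s` of `γ`, the vanishing condition on the last row of `s ∘ σ` that defines the
slice `S_(k+1)`, read off on `s` itself. -/
def LastRowVanishes (s : (Fin (m + 2 * k) → ℂ) →ₗ[ℂ] (Fin (m + 2 * (k + 1)) → ℂ)) : Prop :=
  ∀ (i : Fin (m + 2 * (k + 1))) (j : Fin (m + 2 * k)), (i : ℕ) + 1 = m + 2 * (k + 1) →
    k ≤ (j : ℕ) → (j : ℕ) < m + k → s (Pi.single j 1) i = 0

lemma section_comp_mem_MVslice_iff (hs : dropBlockEnds m k ∘ₗ s = LinearMap.id) :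
    s ∘ₗ dropBlockStarts m k ∈ MVslice m (k + 1) ↔ LastRowVanishes s := by
  have hslice : s ∘ₗ dropBlockStarts m k ∈ slice' m (k + 1) := by
    rw [mem_slice'_succ_iff, ← LinearMap.comp_assoc, hs, LinearMap.id_comp]
  have hsingle (j : Fin (m + 2 * k)) : (s ∘ₗ dropBlockStarts m k)
      (Pi.single (skipBlockStarts m k j) 1) = s (Pi.single j 1) := by
    rw [LinearMap.comp_apply, funLeft_single_of_injective skipBlockStarts_injective]
  rw [mem_MVslice_iff, and_iff_right hslice, forall_prop_of_true k.succ_ne_zero]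
  refine forall_congr' fun i => ⟨fun h j hi hj hj' => ?_, fun h j hi hj hj' => ?_⟩
  · rw [← hsingle]
    refine h _ hi ?_ ?_ <;> simp only [skipBlockStarts] <;> grind
  · obtain ⟨l, rfl⟩ := mem_range_skipBlockStarts_iff.2 (show (j : ℕ) ≠ 0 ∧ _ by omega)
    rw [hsingle]
    refine h l hi ?_ ?_ <;> simp only [skipBlockStarts] at hj hj' <;> grind

lemma comp_section_mem_slice' (hs : dropBlockEnds m k ∘ₗ s = LinearMap.id) :
    dropBlockStarts m k ∘ₗ s ∈ slice' m k := by
  rw [mem_slice'_iff]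
  intro w i j hij
  rw [LinearMap.comp_apply, LinearMap.funLeft_apply, skipBlockStarts_eq_skipBlockEnds_iff.2 hij]
  exact congrFun (LinearMap.congr_fun hs w) j

lemma comp_section_mem_MVslice_iff (hs : dropBlockEnds m k ∘ₗ s = LinearMap.id) :
    dropBlockStarts m k ∘ₗ s ∈ MVslice m k ↔ (k ≠ 0 → LastRowVanishes s) := by
  rw [mem_MVslice_iff, and_iff_right (comp_section_mem_slice' hs)]
  refine forall_congr' fun hk => ⟨fun h i j hi hj hj' => ?_, fun h i j hi hj hj' => ?_⟩
  · obtain ⟨l, rfl⟩ := mem_range_skipBlockStarts_iff.2 (show (i : ℕ) ≠ 0 ∧ _ by omega)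
    refine h l j ?_ hj hj'
    simp only [skipBlockStarts] at hi
    grind
  · refine h (skipBlockStarts m k i) j ?_ hj hj'
    simp only [skipBlockStarts]
    grind

lemma mem_MVslice_and_finrank_ker_eq_two_iff {x : Module.End ℂ (Fin (m + 2 * (k + 1)) → ℂ)} :
    x ∈ MVslice m (k + 1) ∧ finrank ℂ (LinearMap.ker x) = 2 ↔
      ∃ s, dropBlockEnds m k ∘ₗ s = LinearMap.id ∧ LastRowVanishes s ∧
        s ∘ₗ dropBlockStarts m k = x := by
  have hfactor := comp_eq_and_finrank_ker_eq_iff_exists_section (γ := dropBlockEnds m k)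
    (x := x) dropBlockStarts_surjective
  rw [finrank_ker_dropBlockStarts, ← mem_slice'_succ_iff] at hfactor
  constructor
  · rintro ⟨hx, hker⟩
    obtain ⟨s, hs, rfl⟩ := hfactor.1 ⟨hx.1, hker⟩
    exact ⟨s, hs, (section_comp_mem_MVslice_iff hs).1 hx, rfl⟩
  · rintro ⟨s, hs, hlast, rfl⟩
    exact ⟨(section_comp_mem_MVslice_iff hs).2 hlast, (hfactor.2 ⟨s, hs, rfl⟩).2⟩

lemma Phi_section_comp (hs : dropBlockEnds m k ∘ₗ s = LinearMap.id) :
    Phi m (k + 1) (s ∘ₗ dropBlockStarts m k) = dropBlockStarts m k ∘ₗ s := by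
  have hrange : LinearMap.range s = LinearMap.range (s ∘ₗ dropBlockStarts m k) :=
    (LinearMap.range_comp_of_range_eq_top s
      (LinearMap.range_eq_top.2 dropBlockStarts_surjective)).symm
  have hγ : gam m (k + 1) ∘ₗ s = LinearMap.id := gam_succ ▸ hs
  rw [Phi, dif_pos (domRestrict_bijective_of_range_eq hγ hrange),
    subtype_comp_ofBijective_domRestrict_symm hγ hrange, ← LinearMap.comp_assoc,
    ← LinearMap.comp_assoc, hγ, LinearMap.id_comp]

/-- The section `s` of `γ` with `σ ∘ s = y`, for `y` in the slice `S_k`: its free coordinates, at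
the ends of the two blocks, are the free rows of `y`, or zero if the corresponding block of
`ℂ^(m+2k)` is empty. -/
abbrev sectionOf (y : Module.End ℂ (Fin (m + 2 * k) → ℂ)) :
    (Fin (m + 2 * k) → ℂ) →ₗ[ℂ] (Fin (m + 2 * (k + 1)) → ℂ) :=
  extendSection (skipBlockEnds m k) (skipBlockStarts m k) y

lemma dropBlockEnds_comp_sectionOf (y : Module.End ℂ (Fin (m + 2 * k) → ℂ)) :
    dropBlockEnds m k ∘ₗ sectionOf y = LinearMap.id :=
  funLeft_comp_extendSection skipBlockEnds_injective y

lemma dropBlockStarts_comp_sectionOf {y : Module.End ℂ (Fin (m + 2 * k) → ℂ)}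
    (hy : y ∈ slice' m k) : dropBlockStarts m k ∘ₗ sectionOf y = y :=
  funLeft_comp_extendSection_eq skipBlockEnds_injective skipBlockStarts_injective fun w i j hij =>
    mem_slice'_iff.1 hy w i j (skipBlockStarts_eq_skipBlockEnds_iff.1 hij)

lemma sectionOf_comp (hs : dropBlockEnds m k ∘ₗ s = LinearMap.id) (hlast : LastRowVanishes s) :
    sectionOf (dropBlockStarts m k ∘ₗ s) = s := by
  refine extendSection_funLeft_comp skipBlockEnds_injective skipBlockStarts_injective hs
    fun j l hle hld => ?_
  rw [mem_range_skipBlockEnds_iff] at hle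
  rw [mem_range_skipBlockStarts_iff] at hld
  have hj := j.isLt
  exact hlast l j (by omega) (by omega) (by omega)

lemma lastRowVanishes_sectionOf {y : Module.End ℂ (Fin (m + 2 * k) → ℂ)} (hy : y ∈ MVslice m k) :
    LastRowVanishes (sectionOf y) := by
  by_cases hk : k = 0
  · intro i j hi _ _
    refine extendSection_apply_of_notMem_range ?_ ?_ y _
    · rw [mem_range_skipBlockEnds_iff]
      omega
    · rw [mem_range_skipBlockStarts_iff]
      omega
  · refine (comp_section_mem_MVslice_iff (dropBlockEnds_comp_sectionOf y)).1 ?_ hk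
    rwa [dropBlockStarts_comp_sectionOf hy.1]

end Sections

lemma Phi_bijOn_succ (m k : ℕ) :
    Set.BijOn (Phi m (k + 1))
      {x | x ∈ MVslice m (k + 1) ∧ finrank ℂ (LinearMap.ker x) = 2} (MVslice m k) := by
  have hmaps : Set.MapsTo (fun y => sectionOf y ∘ₗ dropBlockStarts m k) (MVslice m k)
      {x | x ∈ MVslice m (k + 1) ∧ finrank ℂ (LinearMap.ker x) = 2} := fun y hy =>
    mem_MVslice_and_finrank_ker_eq_two_iff.2
      ⟨sectionOf y, dropBlockEnds_comp_sectionOf y, lastRowVanishes_sectionOf hy, rfl⟩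
  refine Set.InvOn.bijOn ⟨fun x hx => ?_, fun y hy => ?_⟩ (fun x hx => ?_) hmaps
  · obtain ⟨s, hs, hlast, rfl⟩ := mem_MVslice_and_finrank_ker_eq_two_iff.1 hx
    simp only [Phi_section_comp hs, sectionOf_comp hs hlast]
  · exact (Phi_section_comp (dropBlockEnds_comp_sectionOf y)).trans
      (dropBlockStarts_comp_sectionOf hy.1)
  · obtain ⟨s, hs, hlast, rfl⟩ := mem_MVslice_and_finrank_ker_eq_two_iff.1 hx
    rw [Phi_section_comp hs]
    exact (comp_section_mem_MVslice_iff hs).2 fun _ => hlast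

theorem Phi_bijOn_nilpotent_slice_general (m n : ℕ) (hn : 1 ≤ n) :
    Set.BijOn (Phi m n) {x | x ∈ MVslice m n ∧ finrank ℂ (LinearMap.ker x) = 2}
        (MVslice m (n - 1)) ∧
      ∀ x ∈ MVslice m n, finrank ℂ (LinearMap.ker x) = 2 →
        (IsNilpotent (Phi m n x) ↔ IsNilpotent x) := by
  obtain ⟨k, rfl⟩ := Nat.exists_eq_add_of_le' hn
  refine ⟨Phi_bijOn_succ m k, fun x hx hker => ?_⟩
  obtain ⟨s, hs, -, rfl⟩ := mem_MVslice_and_finrank_ker_eq_two_iff.1 ⟨hx, hker⟩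
  rw [Phi_section_comp hs]
  exact isNilpotent_comp_comm (dropBlockStarts m k) s

/-- The map `x ↦ Φ(x) = γ ∘ x ∘ (γ|_{im x})⁻¹` is a bijection from the
set of nilpotent elements of the Mirkovic–Vybornov slice `S_n` with two-dimensional
kernel onto the set of nilpotent elements of the slice `S_{n−1}`. -/
theorem Phi_bijOn_nilpotent_slice (m n : ℕ) (hn : 1 ≤ n) :
    Set.BijOn (Phi m n)
      { x | x ∈ MVslice m n ∧ IsNilpotent x ∧ Module.finrank ℂ (LinearMap.ker x) = 2 }
      { y | y ∈ MVslice m (n-1) ∧ IsNilpotent y } := by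
  obtain ⟨hbij, hnil⟩ := Phi_bijOn_nilpotent_slice_general m n hn
  simpa only [Set.mem_ofPred_eq, and_assoc, and_comm (a := IsNilpotent _)] using
    bijOn_setOf_mem_and hbij fun x hx => hnil x hx.1 hx.2
end
end

section
/- Let x ∈ S_n' be nilpotent (regarding x as an endomorphism of W via the identification W ≅ ℂ^N). Then there exists a unique subspace L ⊆ V such that: (i) z L ⊆ L; (ii) P restricts to a linear isomorphism from L onto W; and (iii) P ∘ z ∘ (P|_L)^{−1} = x as endomorphisms of W. (Lemma 2.5 of the paper: existence and uniqueness of the z-stable lift L_{m+2n} with P(L_{m+2n}) = W_{m,n} and P z P^{−1} = x.) -/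
/-!
Let `c` read off the coordinates of `u_1` and `u_{m+n+1}` on `W`. A subspace `L` satisfying (i) and
(iii) satisfies `c P z^k v = c x^k P v` for all `v ∈ L` and all `k`, that is, it lies in the
subspace `L₀` of all `v` for which the sequences `(c P z^k v)_k` and `(c x^k P v)_k` agree.
If `P` is bijective on both `L` and `L₀`, the two are equal. And `L₀` satisfies (i)–(iii), for
three reasons. The sequence `(c P z^k v)_k` lists the coordinates of `v`, hence determines it.
Since `x^N = 0`, every sequence `(c x^k w)_k` vanishes from `k = N` on, and any such sequence equals
`(c P z^k v)_k` for some `v ∈ V`. Finally, since `x ∈ S_n'`, the coordinates of `w` occur in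
`(c x^k w)_k` at the same places as those of `P v` in `(c P z^k v)_k`, so that equality of the
two sequences forces `P v = w`.
-/

open Module BigOperators

noncomputable section

/-- The standard basis of `V = ℂ^(2(m+2n))`, indexed `1`-based: for `1 ≤ k ≤ m+2n`,
`bigVec k` is `ê_k`, and for `1 ≤ j ≤ m+2n`, `bigVec (m+2n+j)` is `f̂_j`. -/
def bigVec (m n : ℕ) (k : ℕ) : Fin (2*(m + 2*n)) → ℂ := fun i => if (i : ℕ) + 1 = k then 1 else 0

/-- The matrix of `z ∈ End(V)`, `z ê_i = ê_{i-1}`, `z f̂_j = f̂_{j-1}` (`ê_0 = f̂_0 = 0`). -/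
def bigZMat (m n : ℕ) : Matrix (Fin (2*(m + 2*n))) (Fin (2*(m + 2*n))) ℂ :=
  fun i j => if (j : ℕ) = (i : ℕ) + 1 ∧ (j : ℕ) ≠ m + 2*n then 1 else 0

/-- The endomorphism `z` of `V = ℂ^(2(m+2n))`. -/
def bigZ (m n : ℕ) : Module.End ℂ (Fin (2*(m + 2*n)) → ℂ) := Matrix.toLin' (bigZMat m n)

/-- The matrix of the projection `P : V → W ≅ ℂ^(m+2n)`:
`P ê_i = u_i` for `i ≤ m+n`, `P ê_i = 0` for `i > m+n`,
`P f̂_j = u_{m+n+j}` for `j ≤ n`, `P f̂_j = 0` for `j > n`. -/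
def projMat (m n : ℕ) : Matrix (Fin (m + 2*n)) (Fin (2*(m + 2*n))) ℂ :=
  fun i j => if ((j : ℕ) = (i : ℕ) ∧ (i : ℕ) < m + n) ∨
      ((j : ℕ) = (i : ℕ) + n ∧ m + n ≤ (i : ℕ)) then 1 else 0

/-- The projection `P : V → W ≅ ℂ^(m+2n)` (composed with the identification `W ≅ ℂ^(m+2n)`
via `ê_i ↦ u_i`, `f̂_j ↦ u_{m+n+j}`). -/
def proj (m n : ℕ) : (Fin (2*(m + 2*n)) → ℂ) →ₗ[ℂ] (Fin (m + 2*n) → ℂ) :=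
  Matrix.toLin' (projMat m n)

section Observability

variable {R V W C : Type*} [Semiring R] [AddCommMonoid V] [Module R V] [AddCommMonoid W]
  [Module R W] [AddCommMonoid C] [Module R C]

/-- The observability map `v ↦ (c (T ^ k v))_k` of the discrete linear system with dynamics `T` and
output `c`. -/
def observabilityMap (T : Module.End R V) (c : V →ₗ[R] C) : V →ₗ[R] ℕ → C :=
  LinearMap.pi fun k => c ∘ₗ (T ^ k)

@[simp]
theorem observabilityMap_apply (T : Module.End R V) (c : V →ₗ[R] C) (v : V) (k : ℕ) :
    observabilityMap T c v k = c ((T ^ k) v) := rfl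

theorem observabilityMap_map (T : Module.End R V) (c : V →ₗ[R] C) (v : V) (k : ℕ) :
    observabilityMap T c (T v) k = observabilityMap T c v (k + 1) := by
  simp [pow_succ]

variable {z : Module.End R V} {x : Module.End R W} {P : V →ₗ[R] W} {c : V →ₗ[R] C}
  {c' : W →ₗ[R] C}

theorem observabilityMap_eq_of_intertwines (hc : c' ∘ₗ P = c) {L : Submodule R V}
    (hz : ∀ v ∈ L, z v ∈ L) (hx : ∀ v ∈ L, P (z v) = x (P v)) {v : V} (hv : v ∈ L) :
    observabilityMap z c v = observabilityMap x c' (P v) := by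
  ext k
  induction k generalizing v with
  | zero => simp [← hc]
  | succ k ih =>
    rw [← observabilityMap_map, ih (hz v hv), hx v hv, observabilityMap_map]

theorem observabilityMap_map_eq {v : V} {w : W}
    (h : observabilityMap z c v = observabilityMap x c' w) :
    observabilityMap z c (z v) = observabilityMap x c' (x w) := by
  ext k
  rw [observabilityMap_map, observabilityMap_map, h]

theorem existsUnique_invariant_lift (hc : c' ∘ₗ P = c)
    (hinj : Function.Injective (observabilityMap z c))
    (hrange : LinearMap.range (observabilityMap x c') ≤ LinearMap.range (observabilityMap z c))
    (hP : ∀ v w, observabilityMap z c v = observabilityMap x c' w → P v = w) :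
    ∃! L : Submodule R V, (∀ v ∈ L, z v ∈ L) ∧ Function.Bijective (P.domRestrict L) ∧
      ∀ v ∈ L, P (z v) = x (P v) := by
  let L₀ : Submodule R V := LinearMap.eqLocus (observabilityMap z c) (observabilityMap x c' ∘ₗ P)
  have intertwines : ∀ v ∈ L₀, P (z v) = x (P v) := fun v hv =>
    hP _ _ (observabilityMap_map_eq hv)
  have stable : ∀ v ∈ L₀, z v ∈ L₀ := fun v hv =>
    (observabilityMap_map_eq hv).trans (congrArg _ (intertwines v hv).symm)
  have injOn : ∀ v ∈ L₀, ∀ v' ∈ L₀, P v = P v' → v = v' := fun v hv v' hv' h =>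
    hinj (hv.trans ((congrArg (observabilityMap x c') h).trans hv'.symm))
  have surjOn : ∀ w, ∃ v ∈ L₀, P v = w := fun w => by
    obtain ⟨v, hv⟩ := hrange ⟨w, rfl⟩
    have hvw : P v = w := hP v w hv
    exact ⟨v, hv.trans (congrArg _ hvw.symm), hvw⟩
  refine ⟨L₀, ⟨stable, ⟨fun v v' h => Subtype.ext (injOn v v.2 v' v'.2 h), fun w => ?_⟩,
    intertwines⟩, ?_⟩
  · obtain ⟨v, hv, hvw⟩ := surjOn w
    exact ⟨⟨v, hv⟩, hvw⟩
  · rintro L ⟨hz, ⟨-, hsurj⟩, hx⟩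
    have hle : L ≤ L₀ := fun v hv => observabilityMap_eq_of_intertwines hc hz hx hv
    refine le_antisymm hle fun v hv => ?_
    obtain ⟨⟨v', hv'⟩, h⟩ := hsurj (P v)
    exact injOn v' (hle hv') v hv h ▸ hv'

end Observability

section BlockShift

variable {R : Type*} [Semiring R] {d a : ℕ}

/-- `T` shifts coordinates down by one within each of the blocks `{0, …, a - 1}` and
`{a, …, d - 1}`. Nothing is required of the last coordinate of `T w` in each block, so that both
`z` and the elements of `S_n'` are block shifts. -/
def IsBlockShift (a : ℕ) (T : Module.End R (Fin d → R)) : Prop :=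
  ∀ (w : Fin d → R) (i : ℕ) (h : i + 1 < d), i + 1 ≠ a → T w ⟨i, by omega⟩ = w ⟨i + 1, h⟩

/-- The output map reading off the first coordinates of the blocks `{0, …, a - 1}` and
`{a, …, d - 1}`. -/
def blockHeads (R : Type*) [Semiring R] (h : a < d) : (Fin d → R) →ₗ[R] R × R :=
  (LinearMap.proj ⟨0, by omega⟩).prod (LinearMap.proj ⟨a, h⟩)

namespace IsBlockShift

variable {T : Module.End R (Fin d → R)}

theorem pow_apply (hT : IsBlockShift a T) (w : Fin d → R) {i k : ℕ} (hd : i + k < d)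
    (ha : i + k < a ∨ a ≤ i) : (T ^ k) w ⟨i, by omega⟩ = w ⟨i + k, hd⟩ := by
  induction k generalizing w with
  | zero => rfl
  | succ k ih =>
    rw [pow_succ, Module.End.mul_apply, ih _ (by omega) (by omega)]
    exact hT w (i + k) hd (by omega)

theorem observabilityMap_fst (hT : IsBlockShift a T) (h : a < d) (w : Fin d → R) {k : ℕ}
    (hk : k < a) : (observabilityMap T (blockHeads R h) w k).1 = w ⟨k, by omega⟩ := by
  simpa [blockHeads] using hT.pow_apply w (i := 0) (k := k) (by omega) (by omega)

theorem observabilityMap_snd (hT : IsBlockShift a T) (h : a < d) (w : Fin d → R) {k : ℕ}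
    (hk : a + k < d) : (observabilityMap T (blockHeads R h) w k).2 = w ⟨a + k, hk⟩ :=
  hT.pow_apply w hk (Or.inr le_rfl)

theorem observabilityMap_injective (hT : IsBlockShift a T) (h : a < d) :
    Function.Injective (observabilityMap T (blockHeads R h)) := by
  intro v w hvw
  ext ⟨i, hi⟩
  obtain hia | hia := lt_or_ge i a
  · rw [← hT.observabilityMap_fst h v hia, hvw, hT.observabilityMap_fst h w hia]
  · obtain ⟨k, rfl⟩ := Nat.exists_eq_add_of_le hia
    rw [← hT.observabilityMap_snd h v hi, hvw, hT.observabilityMap_snd h w hi]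

end IsBlockShift

end BlockShift

section TwoBlockShift

variable {R : Type*} [CommSemiring R] {d a : ℕ}

theorem toLin'_apply_of_row_eq_single {ι κ : Type*} [Fintype κ] [DecidableEq κ]
    {A : Matrix ι κ R} {i : ι} {j : κ} (h : A i = Pi.single j 1) (v : κ → R) :
    Matrix.toLin' A v i = v j := by
  rw [Matrix.toLin'_apply, Matrix.mulVec, h, single_one_dotProduct]

/-- The nilpotent endomorphism of `R^d` with Jordan blocks on the coordinates `{0, …, a - 1}` and
`{a, …, d - 1}`, of which `z_n` and `z` are instances. -/
def twoBlockShift (R : Type*) [CommSemiring R] (d a : ℕ) : Module.End R (Fin d → R) :=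
  Matrix.toLin' (Matrix.of fun i j => if (j : ℕ) = (i : ℕ) + 1 ∧ (j : ℕ) ≠ a then 1 else 0)

theorem isBlockShift_twoBlockShift : IsBlockShift a (twoBlockShift R d a) := by
  intro w i hd ha
  refine toLin'_apply_of_row_eq_single (funext fun j => ?_) w
  simp only [Matrix.of_apply, Pi.single_apply, Fin.ext_iff]
  grind

theorem twoBlockShift_apply_last (w : Fin d → R) {i : Fin d}
    (hi : (i : ℕ) + 1 = a ∨ (i : ℕ) + 1 = d) : twoBlockShift R d a w i = 0 := by
  simp only [twoBlockShift, Matrix.toLin'_apply, Matrix.mulVec, dotProduct, Matrix.of_apply]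
  refine Finset.sum_eq_zero fun j _ => ?_
  rw [if_neg (by omega), zero_mul]

theorem twoBlockShift_pow_apply_eq_zero (had : a ≤ d) (w : Fin d → R) {i : Fin d} {k : ℕ}
    (h : i < a ∧ a ≤ i + k ∨ a ≤ i ∧ d ≤ i + k) : (twoBlockShift R d a ^ k) w i = 0 := by
  induction k generalizing w with
  | zero => omega
  | succ k ih =>
    rw [pow_succ, Module.End.mul_apply]
    by_cases hk : i < a ∧ a ≤ i + k ∨ a ≤ i ∧ d ≤ i + k
    · exact ih _ hk
    · have hlast : (i : ℕ) + k < d := by omega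
      rw [isBlockShift_twoBlockShift.pow_apply _ hlast (by omega)]
      exact twoBlockShift_apply_last w (by simp only; omega)

theorem mem_range_observabilityMap_twoBlockShift (h : a < d) (ha : 0 < a) {y : ℕ → R × R}
    (hy₁ : ∀ k, a ≤ k → (y k).1 = 0) (hy₂ : ∀ k, d ≤ a + k → (y k).2 = 0) :
    y ∈ LinearMap.range (observabilityMap (twoBlockShift R d a) (blockHeads R h)) := by
  refine ⟨fun i => if (i : ℕ) < a then (y i).1 else (y (i - a)).2, funext fun k => Prod.ext ?_ ?_⟩
  · obtain hk | hk := lt_or_ge k a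
    · rw [isBlockShift_twoBlockShift.observabilityMap_fst h _ hk, if_pos hk]
    · rw [hy₁ k hk]
      exact twoBlockShift_pow_apply_eq_zero h.le _ (by simp only; omega)
  · obtain hk | hk := lt_or_ge (a + k) d
    · rw [isBlockShift_twoBlockShift.observabilityMap_snd h _ hk, if_neg (by simp),
        Nat.add_sub_cancel_left]
    · rw [hy₂ k hk]
      exact twoBlockShift_pow_apply_eq_zero h.le _ (by simp only; omega)

end TwoBlockShift

theorem pow_finrank_eq_zero_of_isNilpotent {K V : Type*} [Field K] [AddCommGroup V] [Module K V]
    [FiniteDimensional K V] {T : Module.End K V} (hT : IsNilpotent T) : T ^ finrank K V = 0 := by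
  obtain ⟨k, hk⟩ := hT
  rw [← LinearMap.ker_eq_top, eq_top_iff, ← LinearMap.ker_eq_top.2 hk]
  exact Module.End.ker_pow_le_ker_pow_finrank T k

section Slice

variable {m n : ℕ}

theorem isBlockShift_zn : IsBlockShift (m + n) (zn m n) :=
  isBlockShift_twoBlockShift

theorem isBlockShift_bigZ : IsBlockShift (m + 2 * n) (bigZ m n) :=
  isBlockShift_twoBlockShift

theorem basisFun_eq_stdVec (j : Fin (m + 2 * n)) :
    Pi.basisFun ℂ (Fin (m + 2 * n)) j = stdVec m n (j + 1) := by
  ext i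
  simp [stdVec, Pi.single_apply, Fin.ext_iff]

theorem apply_eq_zero_of_mem_span_stdVec {w : Fin (m + 2 * n) → ℂ}
    (hw : w ∈ Submodule.span ℂ {stdVec m n (m + n), stdVec m n (m + 2 * n)})
    {i : Fin (m + 2 * n)} (h₁ : (i : ℕ) + 1 ≠ m + n) (h₂ : (i : ℕ) + 1 ≠ m + 2 * n) : w i = 0 := by
  obtain ⟨a, b, rfl⟩ := Submodule.mem_span_pair.1 hw
  simp [stdVec, h₁, h₂]

theorem isBlockShift_of_mem_slice' {x : Module.End ℂ (Fin (m + 2 * n) → ℂ)}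
    (hx : x ∈ slice' m n) : IsBlockShift (m + n) x := by
  intro w i hd ha
  let row : (Fin (m + 2 * n) → ℂ) →ₗ[ℂ] ℂ := LinearMap.proj ⟨i, by omega⟩
  have rows_eq : row ∘ₗ x = row ∘ₗ zn m n :=
    (Pi.basisFun ℂ _).ext fun j => by
      rw [basisFun_eq_stdVec]
      exact sub_eq_zero.1 (apply_eq_zero_of_mem_span_stdVec (hx (j + 1)) ha hd.ne)
  exact (LinearMap.congr_fun rows_eq w).trans (isBlockShift_zn w i hd ha)

theorem proj_apply_left (v : Fin (2 * (m + 2 * n)) → ℂ) {i : ℕ} (hi : i < m + n) :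
    proj m n v ⟨i, by omega⟩ = v ⟨i, by omega⟩ := by
  refine toLin'_apply_of_row_eq_single (funext fun j => ?_) v
  simp only [projMat, Pi.single_apply, Fin.ext_iff]
  grind

theorem proj_apply_right (v : Fin (2 * (m + 2 * n)) → ℂ) {k : ℕ} (hk : m + n + k < m + 2 * n) :
    proj m n v ⟨m + n + k, hk⟩ = v ⟨m + 2 * n + k, by omega⟩ := by
  refine toLin'_apply_of_row_eq_single (funext fun j => ?_) v
  simp only [projMat, Pi.single_apply, Fin.ext_iff]
  grind

theorem blockHeads_comp_proj (h : m + n < m + 2 * n) (h' : m + 2 * n < 2 * (m + 2 * n)) :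
    blockHeads ℂ h ∘ₗ proj m n = blockHeads ℂ h' :=
  LinearMap.ext fun v => Prod.ext (proj_apply_left v (by omega)) (proj_apply_right v (k := 0) h)

theorem proj_eq_of_observabilityMap_eq {x : Module.End ℂ (Fin (m + 2 * n) → ℂ)}
    (hx : IsBlockShift (m + n) x) (h : m + n < m + 2 * n) (h' : m + 2 * n < 2 * (m + 2 * n))
    (v : Fin (2 * (m + 2 * n)) → ℂ) (w : Fin (m + 2 * n) → ℂ)
    (hvw : observabilityMap (bigZ m n) (blockHeads ℂ h') v =
      observabilityMap x (blockHeads ℂ h) w) :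
    proj m n v = w := by
  ext ⟨i, hi⟩
  obtain hia | hia := lt_or_ge i (m + n)
  · rw [proj_apply_left v hia, ← isBlockShift_bigZ.observabilityMap_fst h' v (by omega), hvw,
      hx.observabilityMap_fst h w hia]
  · obtain ⟨k, rfl⟩ := Nat.exists_eq_add_of_le hia
    rw [proj_apply_right v hi, ← isBlockShift_bigZ.observabilityMap_snd h' v (by omega), hvw,
      hx.observabilityMap_snd h w hi]

theorem range_observabilityMap_le_of_isNilpotent {x : Module.End ℂ (Fin (m + 2 * n) → ℂ)}
    (hx : IsNilpotent x) (c : (Fin (m + 2 * n) → ℂ) →ₗ[ℂ] ℂ × ℂ)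
    (h : m + 2 * n < 2 * (m + 2 * n)) :
    LinearMap.range (observabilityMap x c) ≤
      LinearMap.range (observabilityMap (bigZ m n) (blockHeads ℂ h)) := by
  rintro _ ⟨w, rfl⟩
  have x_pow_eq_zero : ∀ k, m + 2 * n ≤ k → x ^ k = 0 := fun k hk =>
    pow_eq_zero_of_le hk (by simpa using pow_finrank_eq_zero_of_isNilpotent hx)
  refine mem_range_observabilityMap_twoBlockShift h (by omega) (fun k hk => ?_) (fun k hk => ?_)
  · simp [x_pow_eq_zero k hk]
  · simp [x_pow_eq_zero k (by omega)]

end Slice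

/-- For nilpotent `x ∈ S_n'` there is a unique subspace `L ⊆ V` such
that (i) `z L ⊆ L`, (ii) `P` restricts to a linear isomorphism from `L` onto
`W ≅ ℂ^(m+2n)`, and (iii) `P ∘ z ∘ (P|_L)⁻¹ = x`. -/
theorem exists_unique_z_stable_lift (m n : ℕ) (hn : 1 ≤ n)
    (x : Module.End ℂ (Fin (m + 2*n) → ℂ)) (hx : x ∈ slice' m n)
    (hnil : IsNilpotent x) :
    ∃! L : Submodule ℂ (Fin (2*(m + 2*n)) → ℂ),
      (∀ v ∈ L, bigZ m n v ∈ L) ∧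
      Function.Bijective ((proj m n).domRestrict L) ∧
      (∀ v ∈ L, proj m n (bigZ m n v) = x (proj m n v)) := by
  have h : m + n < m + 2*n := by omega
  have h' : m + 2*n < 2*(m + 2*n) := by omega
  exact existsUnique_invariant_lift (blockHeads_comp_proj h h')
    (isBlockShift_bigZ.observabilityMap_injective h')
    (range_observabilityMap_le_of_isNilpotent hnil (blockHeads ℂ h) h')
    (proj_eq_of_observabilityMap_eq (isBlockShift_of_mem_slice' hx) h h')
end
end
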